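/- arXiv:1504.04723 — 3 statements merged into one kernel-verified Lean document; each statement's English description precedes it below -/
import Mathlib

section
/- Let a < 0, b > 0, r > 1, σ = −a·r, ξ = (σ·b/(2·a²))·(a·(r − 2) − σ + √((σ − a·r)² + 4·a·σ)), x₁ = σ·b·√ξ/(σ·b + a·ξ), y₁ = √ξ, z₁ = σ·ξ/(σ·b + a·ξ). If a·r + 1 < 0, then p₂(x₁, y₁, z₁) > 0, where p₂(x, y, z) = x² + a·y² − a·z² − a·r·(b − r + 1) + b. -/
/-!
When `σ = -a * r`, the equilibrium equations force `z ^ 2 = r * (r - 1)` and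
`y ^ 2 = b * z * (r - z)` wherever `y ≠ 0`, and these turn `p₂` into
`x ^ 2 + b - a * b * r * (r - z)`. Every term is positive because `z ^ 2 < r ^ 2`. The point
`(x₁, y₁, z₁)` is such an equilibrium: eliminating `x` and `z` leaves a quadratic equation for
`y ^ 2`, and `ξ` is its positive root.
-/

variable {a b r σ x y z : ℝ}

/-- `(x, y, z)` is an equilibrium of the generalized Lorenz (Rabinovich) system: the three
components of its vector field vanish there. -/
structure IsRabinovichEquilibrium (a b r σ x y z : ℝ) : Prop where
  x_eq : -σ * (x - y) - a * y * z = 0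
  y_eq : r * x - y - x * z = 0
  z_eq : -b * z + x * y = 0

namespace IsRabinovichEquilibrium

theorem y_sq_eq (h : IsRabinovichEquilibrium a b r σ x y z) : y ^ 2 = b * z * (r - z) := by
  linear_combination -y * h.y_eq + (r - z) * h.z_eq

theorem z_sq_eq (h : IsRabinovichEquilibrium a b r (-a * r) x y z) (ha : a ≠ 0) (hy : y ≠ 0) :
    z ^ 2 = r * (r - 1) := by
  refine mul_left_cancel₀ (mul_ne_zero ha hy) ?_
  linear_combination (r - z) * h.x_eq - a * r * h.y_eq

theorem z_lt (h : IsRabinovichEquilibrium a b r (-a * r) x y z) (ha : a ≠ 0) (hr : 0 < r)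
    (hy : y ≠ 0) : z < r := by
  refine lt_of_pow_lt_pow_left₀ 2 hr.le ?_
  linear_combination h.z_sq_eq ha hy + hr

theorem p2_eq (h : IsRabinovichEquilibrium a b r (-a * r) x y z) (ha : a ≠ 0) (hy : y ≠ 0) :
    x ^ 2 + a * y ^ 2 - a * z ^ 2 - a * r * (b - r + 1) + b =
      x ^ 2 + b - a * b * r * (r - z) := by
  linear_combination a * h.y_sq_eq - a * (b + 1) * h.z_sq_eq ha hy

theorem p2_pos (h : IsRabinovichEquilibrium a b r (-a * r) x y z) (ha : a < 0) (hb : 0 < b)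
    (hr : 0 < r) (hy : y ≠ 0) :
    0 < x ^ 2 + a * y ^ 2 - a * z ^ 2 - a * r * (b - r + 1) + b := by
  have hrz : 0 < r - z := sub_pos.2 (h.z_lt ha.ne hr hy)
  have hneg : a * b * r * (r - z) < 0 :=
    mul_neg_of_neg_of_pos (mul_neg_of_neg_of_pos (mul_neg_of_neg_of_pos ha hb) hr) hrz
  rw [h.p2_eq ha.ne hy]
  linarith [sq_nonneg x]

/-- The hypothesis on `y` is the second equilibrium equation after elimination of `x` and `z`. -/
theorem of_quadratic (hb : b ≠ 0) (hσ : σ ≠ 0)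
    (h : a ^ 2 * (y ^ 2) ^ 2 + σ * b * (σ - a * (r - 2)) * y ^ 2 - (σ * b) ^ 2 * (r - 1) = 0) :
    IsRabinovichEquilibrium a b r σ
      (σ * b * y / (σ * b + a * y ^ 2)) y (σ * y ^ 2 / (σ * b + a * y ^ 2)) := by
  have hden : σ * b + a * y ^ 2 ≠ 0 := by
    intro hden_zero
    have hy : σ ^ 2 * b * y ^ 2 = 0 := by
      linear_combination h - (σ * b + a * y ^ 2 - r * σ * b) * hden_zero
    have hy_zero : y ^ 2 = 0 := by simpa [hσ, hb] using hy
    exact mul_ne_zero hσ hb (by simpa [hy_zero] using hden_zero)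
  obtain ⟨D, hD⟩ : ∃ D, σ * b + a * y ^ 2 = D := ⟨_, rfl⟩
  rw [hD] at hden ⊢
  constructor
  · field_simp
    linear_combination -σ * y * hD
  · field_simp
    subst hD
    linear_combination -y * h
  · field_simp
    ring

end IsRabinovichEquilibrium

/-- The quantity `ξ` of the paper, the value of `y ^ 2` at the two equilibria of the Rabinovich
system outside the origin. -/
noncomputable def rabinovichXi (a b r σ : ℝ) : ℝ :=
  σ * b / (2 * a ^ 2) * (a * (r - 2) - σ + √((σ - a * r) ^ 2 + 4 * a * σ))

theorem rabinovichXi_discrim_eq (a r σ : ℝ) :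
    (σ - a * r) ^ 2 + 4 * a * σ = (σ - a * (r - 2)) ^ 2 + 4 * a ^ 2 * (r - 1) := by
  ring

theorem rabinovichXi_quadratic (ha : a ≠ 0) (hr : 1 ≤ r) :
    a ^ 2 * rabinovichXi a b r σ ^ 2 + σ * b * (σ - a * (r - 2)) * rabinovichXi a b r σ
      - (σ * b) ^ 2 * (r - 1) = 0 := by
  have hdiscrim : 0 ≤ (σ - a * r) ^ 2 + 4 * a * σ := by
    rw [rabinovichXi_discrim_eq]
    exact add_nonneg (sq_nonneg _) (mul_nonneg (by positivity) (sub_nonneg.2 hr))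
  have hsq := Real.sq_sqrt hdiscrim
  unfold rabinovichXi
  generalize √((σ - a * r) ^ 2 + 4 * a * σ) = t at hsq ⊢
  field_simp
  linear_combination (σ * b) ^ 2 * hsq

theorem rabinovichXi_pos (ha : a ≠ 0) (hσb : 0 < σ * b) (hr : 1 < r) :
    0 < rabinovichXi a b r σ := by
  have hsqrt : σ - a * (r - 2) < √((σ - a * r) ^ 2 + 4 * a * σ) := by
    apply Real.lt_sqrt_of_sq_lt
    rw [rabinovichXi_discrim_eq]
    exact lt_add_of_pos_right _ (mul_pos (by positivity) (sub_pos.2 hr))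
  exact mul_pos (by positivity) (by linarith)

theorem p2_pos_of_ar_add_one_neg_general
    (a b r σ ξ x₁ y₁ z₁ : ℝ) (ha : a < 0) (hb : 0 < b) (hr : 1 < r) (hσ : σ = -a * r)
    (hξ : ξ = (σ * b / (2 * a ^ 2)) *
      (a * (r - 2) - σ + Real.sqrt ((σ - a * r) ^ 2 + 4 * a * σ)))
    (hx₁ : x₁ = σ * b * Real.sqrt ξ / (σ * b + a * ξ))
    (hy₁ : y₁ = Real.sqrt ξ)
    (hz₁ : z₁ = σ * ξ / (σ * b + a * ξ)) :
    0 < x₁ ^ 2 + a * y₁ ^ 2 - a * z₁ ^ 2 - a * r * (b - r + 1) + b := by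
  have hr₀ : 0 < r := one_pos.trans hr
  have hσ_pos : 0 < σ := hσ ▸ mul_pos (neg_pos.2 ha) hr₀
  change ξ = rabinovichXi a b r σ at hξ
  have hξ_pos : 0 < ξ := hξ ▸ rabinovichXi_pos ha.ne (mul_pos hσ_pos hb) hr
  have hy_sq : y₁ ^ 2 = ξ := hy₁ ▸ Real.sq_sqrt hξ_pos.le
  have hy_ne : y₁ ≠ 0 := hy₁ ▸ (Real.sqrt_pos.2 hξ_pos).ne'
  have heq : IsRabinovichEquilibrium a b r σ x₁ y₁ z₁ := by
    rw [hx₁, hz₁, ← hy₁, ← hy_sq]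
    apply IsRabinovichEquilibrium.of_quadratic hb.ne' hσ_pos.ne'
    rw [hy_sq, hξ]
    exact rabinovichXi_quadratic ha.ne hr.le
  exact (hσ ▸ heq).p2_pos ha hb hr₀ hy_ne

/-- if a·r + 1 < 0 then p₂(x₁, y₁, z₁) > 0. -/
theorem p2_pos_of_ar_add_one_neg
    (a b r σ ξ x₁ y₁ z₁ : ℝ) (ha : a < 0) (hb : 0 < b) (hr : 1 < r) (hσ : σ = -a * r)
    (hξ : ξ = (σ * b / (2 * a ^ 2)) *
      (a * (r - 2) - σ + Real.sqrt ((σ - a * r) ^ 2 + 4 * a * σ)))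
    (hx₁ : x₁ = σ * b * Real.sqrt ξ / (σ * b + a * ξ))
    (hy₁ : y₁ = Real.sqrt ξ)
    (hz₁ : z₁ = σ * ξ / (σ * b + a * ξ))
    (har : a * r + 1 < 0) :
    0 < x₁ ^ 2 + a * y₁ ^ 2 - a * z₁ ^ 2 - a * r * (b - r + 1) + b :=
  p2_pos_of_ar_add_one_neg_general a b r σ ξ x₁ y₁ z₁ ha hb hr hσ hξ hx₁ hy₁ hz₁
end

section
/- (Lemma on stability, case (ii)) Let a < 0, b > 0, r > 1, σ = −a·r, ξ = (σ·b/(2·a²))·(a·(r − 2) − σ + √((σ − a·r)² + 4·a·σ)), x₁ = σ·b·√ξ/(σ·b + a·ξ), y₁ = √ξ, z₁ = σ·ξ/(σ·b + a·ξ). If a·r + 1 < 0 and b > b_cr, where b_cr = (4·a·(r − 1)·(a·r + 1)·√(r·(r − 1)) + (a·r − 1)³)/((a·r + 1)² − 4·a·r²), then every complex root λ of the cubic polynomial λ³ + p₁·λ² + p₂(x₁, y₁, z₁)·λ + p₃(x₁, y₁, z₁) has negative real part, where p₁ = b − a·r + 1, p₂(x, y, z) = x² + a·y² − a·z² − a·r·(b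 − r + 1) + b, p₃(x, y, z) = −a·(2·x·y·z + r·x² − y² + b·z² − b·r·(r − 1)). -/
/-!
At an equilibrium `(x, y, z)` with `x ≠ 0`, the relation `σ = -a * r` turns the first two
equilibrium equations into `r * x = y * (r + z)` and `y = x * (r - z)`, hence
`z ^ 2 = r * (r - 1)`. Together with `x * y = b * z` this gives `x ^ 2 = b * (z + r - 1)` and
`y ^ 2 = b * z * (r - z)`, so that `p₂ = b * (z + r - a * r * (r - z))` and
`p₃ = -4 * a * b * z ^ 2`. Both are positive, and after division by `b` the Routh–Hurwitz
inequality `p₃ < p₁ * p₂` is linear in `b`; solving it for `b` and rationalising the denominator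
gives exactly `b_cr < b`.
-/

theorem re_neg_of_routhHurwitz_cubic {p q t : ℝ} (hp : 0 < p) (ht : 0 < t) (h : t < p * q)
    {w : ℂ} (hw : w ^ 3 + (p : ℂ) * w ^ 2 + (q : ℂ) * w + (t : ℂ) = 0) : w.re < 0 := by
  have hq : 0 < q := pos_of_mul_pos_right (ht.trans h) hp.le
  obtain ⟨u, v⟩ := w
  have hre : u ^ 3 - 3 * u * v ^ 2 + p * (u ^ 2 - v ^ 2) + q * u + t = 0 := by
    have := congrArg Complex.re hw
    simp only [pow_succ, pow_zero, one_mul, Complex.add_re, Complex.mul_re, Complex.mul_im,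
      Complex.ofReal_re, Complex.ofReal_im, zero_mul, sub_zero, Complex.zero_re] at this
    linear_combination this
  have him : v * (3 * u ^ 2 - v ^ 2 + 2 * p * u + q) = 0 := by
    have := congrArg Complex.im hw
    simp only [pow_succ, pow_zero, one_mul, Complex.add_im, Complex.mul_im, Complex.mul_re,
      Complex.ofReal_re, Complex.ofReal_im, zero_mul, add_zero, Complex.zero_im] at this
    linear_combination this
  change u < 0
  by_contra! hu
  rcases mul_eq_zero.mp him with rfl | hv
  · have : 0 < u ^ 3 + p * u ^ 2 + q * u + t := by positivity
    linarith
  · -- Eliminating `v` leaves the cubic satisfied by half the sum of the conjugate roots.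
    have resolvent : 8 * u ^ 3 + 8 * p * u ^ 2 + (2 * q + 2 * p ^ 2) * u + (p * q - t) = 0 := by
      linear_combination -hre + (3 * u + p) * hv
    have : 0 ≤ 8 * u ^ 3 + 8 * p * u ^ 2 + (2 * q + 2 * p ^ 2) * u := by positivity
    linarith

/-- `(x, y, z)` is an equilibrium of the generalized Lorenz (Rabinovich) system with parameters
`σ`, `a`, `b`, `r`: the three components of the vector field vanish. -/
structure IsRabinovichEquilibrium_s13 (σ a b r x y z : ℝ) : Prop where
  x_eq : -σ * (x - y) - a * y * z = 0
  y_eq : r * x - y - x * z = 0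
  z_eq : -b * z + x * y = 0

namespace Rabinovich

/-- The quantity `ξ`, the square of the `y`-coordinate of the equilibria off the origin. -/
noncomputable def xi (σ a b r : ℝ) : ℝ :=
  σ * b / (2 * a ^ 2) * (a * (r - 2) - σ + √((σ - a * r) ^ 2 + 4 * a * σ))

/-- The coefficient `p₂` of the characteristic polynomial of the Jacobian at `(x, y, z)`, for
`σ = -a * r`. -/
def charCoeff₂ (a b r x y z : ℝ) : ℝ :=
  x ^ 2 + a * y ^ 2 - a * z ^ 2 - a * r * (b - r + 1) + b

/-- The coefficient `p₃` of the characteristic polynomial of the Jacobian at `(x, y, z)`, for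
`σ = -a * r`. -/
def charCoeff₃ (a b r x y z : ℝ) : ℝ :=
  -a * (2 * x * y * z + r * x ^ 2 - y ^ 2 + b * z ^ 2 - b * r * (r - 1))

/-- The critical value `b_cr` of the parameter `b`. -/
noncomputable def bCr (a r : ℝ) : ℝ :=
  (4 * a * (r - 1) * (a * r + 1) * √(r * (r - 1)) + (a * r - 1) ^ 3) /
    ((a * r + 1) ^ 2 - 4 * a * r ^ 2)

section Existence

variable {σ a b r : ℝ}

theorem xi_radicand_eq :
    (σ - a * r) ^ 2 + 4 * a * σ = (a * (r - 2) - σ) ^ 2 + 4 * a ^ 2 * (r - 1) := by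
  ring

theorem xi_pos (hσ : 0 < σ) (ha : a ≠ 0) (hb : 0 < b) (hr : 1 < r) : 0 < xi σ a b r := by
  have hsqrt : -(a * (r - 2) - σ) < √((σ - a * r) ^ 2 + 4 * a * σ) := by
    apply Real.lt_sqrt_of_sq_lt
    rw [xi_radicand_eq, neg_sq]
    have := sub_pos.mpr hr
    exact lt_add_of_pos_right _ (by positivity)
  exact mul_pos (by positivity) (neg_lt_iff_pos_add'.mp hsqrt)

/-- In this form the quadratic equation for `xi` is the second equilibrium equation with the
denominators cleared. -/
theorem xi_quadratic (ha : a ≠ 0) (hr : 1 ≤ r) :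
    (σ * b + a * xi σ a b r) * (r * (σ * b) - (σ * b + a * xi σ a b r)) =
      σ ^ 2 * b * xi σ a b r := by
  have hradicand : 0 ≤ (σ - a * r) ^ 2 + 4 * a * σ := by
    rw [xi_radicand_eq]
    have := sub_nonneg.mpr hr
    positivity
  have hsq := Real.sq_sqrt hradicand
  unfold xi
  set δ := √((σ - a * r) ^ 2 + 4 * a * σ)
  field_simp
  linear_combination -(σ ^ 2 * b ^ 2) * hsq

theorem add_mul_xi_pos (hσ : 0 < σ) (ha : a ≠ 0) (hb : 0 < b) (hr : 1 < r) :
    0 < σ * b + a * xi σ a b r := by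
  have hprod : 0 < (σ * b + a * xi σ a b r) * (r * (σ * b) - (σ * b + a * xi σ a b r)) := by
    rw [xi_quadratic ha hr.le]
    have := xi_pos hσ ha hb hr
    positivity
  have hrσb : 0 < r * (σ * b) := by positivity
  by_contra! hneg
  exact hprod.not_ge (mul_nonpos_of_nonpos_of_nonneg hneg (by linarith))

theorem isRabinovichEquilibrium_xi (hσ : 0 < σ) (ha : a ≠ 0) (hb : 0 < b) (hr : 1 < r) :
    IsRabinovichEquilibrium_s13 σ a b r
      (σ * b * √(xi σ a b r) / (σ * b + a * xi σ a b r))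
      √(xi σ a b r)
      (σ * xi σ a b r / (σ * b + a * xi σ a b r)) := by
  have hdenom := (add_mul_xi_pos hσ ha hb hr).ne'
  have hquad := xi_quadratic (σ := σ) (b := b) ha hr.le
  have hsq := Real.sq_sqrt (xi_pos hσ ha hb hr).le
  set ξ := xi σ a b r
  refine ⟨?_, ?_, ?_⟩
  · field_simp
    ring
  · field_simp
    linear_combination √ξ * hquad
  · linear_combination σ * b / (σ * b + a * ξ) * hsq

theorem xi_x_coord_pos (hσ : 0 < σ) (ha : a ≠ 0) (hb : 0 < b) (hr : 1 < r) :
    0 < σ * b * √(xi σ a b r) / (σ * b + a * xi σ a b r) :=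
  div_pos (mul_pos (mul_pos hσ hb) (Real.sqrt_pos.mpr (xi_pos hσ ha hb hr)))
    (add_mul_xi_pos hσ ha hb hr)

end Existence

section Threshold

variable {a r z : ℝ}

theorem charCoeff_factor_pos (ha : a < 0) (hr : 0 < r) (hz : 0 ≤ z) (hzr : z < r) :
    0 < z + r - a * r * (r - z) := by
  have : a * r * (r - z) < 0 :=
    mul_neg_of_neg_of_pos (mul_neg_of_neg_of_pos ha hr) (sub_pos.mpr hzr)
  linarith

theorem bCr_denom_pos (ha : a < 0) (hr : r ≠ 0) : 0 < (a * r + 1) ^ 2 - 4 * a * r ^ 2 := by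
  have : a * r ^ 2 < 0 := mul_neg_of_neg_of_pos ha (by positivity)
  linarith [sq_nonneg (a * r + 1)]

theorem bCr_eq (ha : a < 0) (hr : 0 < r) (hz : 0 ≤ z) (hz_sq : z ^ 2 = r * (r - 1)) :
    bCr a r = -4 * a * z ^ 2 / (z + r - a * r * (r - z)) - (1 - a * r) := by
  have hzr : z < r := lt_of_pow_lt_pow_left₀ 2 hr.le (by linarith)
  have hfactor := (charCoeff_factor_pos ha hr hz hzr).ne'
  have hdenom := (bCr_denom_pos ha hr.ne').ne'
  have hsqrt : √(r * (r - 1)) = z := by rw [← hz_sq, Real.sqrt_sq hz]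
  have conjugate : (z + r - a * r * (r - z)) * (r * (1 - a * r) - z * (1 + a * r)) =
      r * ((a * r + 1) ^ 2 - 4 * a * r ^ 2) := by
    linear_combination -(1 + a * r) ^ 2 * hz_sq
  rw [eq_sub_iff_add_eq]
  calc bCr a r + (1 - a * r)
      = -4 * a * (r - 1) * (r * (1 - a * r) - z * (1 + a * r)) /
          ((a * r + 1) ^ 2 - 4 * a * r ^ 2) := by
        rw [bCr, hsqrt]
        field_simp
        ring
    _ = -4 * a * z ^ 2 / (z + r - a * r * (r - z)) := by
        rw [div_eq_div_iff hdenom hfactor, hz_sq]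
        linear_combination -4 * a * (r - 1) * conjugate

end Threshold

end Rabinovich

namespace IsRabinovichEquilibrium_s13

open Rabinovich

variable {σ a b r x y z : ℝ}

theorem y_sq (h : IsRabinovichEquilibrium_s13 σ a b r x y z) : y ^ 2 = b * z * (r - z) := by
  linear_combination -y * h.y_eq + (r - z) * h.z_eq

theorem x_sq_mul (h : IsRabinovichEquilibrium_s13 σ a b r x y z) : x ^ 2 * (r - z) = b * z := by
  linear_combination x * h.y_eq + h.z_eq

theorem z_pos (h : IsRabinovichEquilibrium_s13 σ a b r x y z) (hb : 0 < b) (hr : 0 < r)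
    (hx : x ≠ 0) : 0 < z := by
  by_contra! hz
  have : 0 < x ^ 2 * (r - z) := mul_pos (by positivity) (by linarith)
  exact (h.x_sq_mul ▸ this).not_ge (mul_nonpos_of_nonneg_of_nonpos hb.le hz)

theorem z_lt_r (h : IsRabinovichEquilibrium_s13 σ a b r x y z) (hb : 0 < b) (hr : 0 < r)
    (hx : x ≠ 0) : z < r := by
  have : 0 < x ^ 2 * (r - z) := h.x_sq_mul ▸ mul_pos hb (h.z_pos hb hr hx)
  exact sub_pos.mp (pos_of_mul_pos_right this (sq_nonneg x))

theorem r_mul_x (h : IsRabinovichEquilibrium_s13 (-a * r) a b r x y z) (ha : a ≠ 0) :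
    r * x = y * (r + z) :=
  mul_left_cancel₀ ha (by linear_combination h.x_eq)

theorem z_sq (h : IsRabinovichEquilibrium_s13 (-a * r) a b r x y z) (ha : a ≠ 0) (hx : x ≠ 0) :
    z ^ 2 = r * (r - 1) :=
  mul_left_cancel₀ hx (by linear_combination h.r_mul_x ha - (r + z) * h.y_eq)

theorem x_sq (h : IsRabinovichEquilibrium_s13 (-a * r) a b r x y z) (ha : a ≠ 0) (hr : r ≠ 0)
    (hx : x ≠ 0) : x ^ 2 = b * (z + r - 1) :=
  mul_left_cancel₀ hr (by
    linear_combination x * h.r_mul_x ha + (r + z) * h.z_eq + b * h.z_sq ha hx)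

theorem charCoeff₂_eq (h : IsRabinovichEquilibrium_s13 (-a * r) a b r x y z) (ha : a ≠ 0)
    (hr : r ≠ 0) (hx : x ≠ 0) :
    charCoeff₂ a b r x y z = b * (z + r - a * r * (r - z)) := by
  rw [charCoeff₂, h.x_sq ha hr hx, h.y_sq]
  linear_combination (-a * b - a) * h.z_sq ha hx

theorem charCoeff₃_eq (h : IsRabinovichEquilibrium_s13 (-a * r) a b r x y z) (ha : a ≠ 0)
    (hr : r ≠ 0) (hx : x ≠ 0) :
    charCoeff₃ a b r x y z = b * (-4 * a * z ^ 2) := by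
  rw [charCoeff₃, h.x_sq ha hr hx, h.y_sq]
  linear_combination -2 * a * z * h.z_eq

theorem charCoeff₃_lt_mul_iff (h : IsRabinovichEquilibrium_s13 (-a * r) a b r x y z) (ha : a < 0)
    (hb : 0 < b) (hr : 0 < r) (hx : x ≠ 0) :
    charCoeff₃ a b r x y z < (b - a * r + 1) * charCoeff₂ a b r x y z ↔ bCr a r < b := by
  have hz := (h.z_pos hb hr hx).le
  have hfactor := charCoeff_factor_pos ha hr hz (h.z_lt_r hb hr hx)
  rw [h.charCoeff₂_eq ha.ne hr.ne' hx, h.charCoeff₃_eq ha.ne hr.ne' hx,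
    bCr_eq ha hr hz (h.z_sq ha.ne hx)]
  calc b * (-4 * a * z ^ 2) < (b - a * r + 1) * (b * (z + r - a * r * (r - z)))
      ↔ -4 * a * z ^ 2 < (b - a * r + 1) * (z + r - a * r * (r - z)) := by
        rw [mul_left_comm (b - a * r + 1), mul_lt_mul_iff_right₀ hb]
    _ ↔ -4 * a * z ^ 2 / (z + r - a * r * (r - z)) < b - a * r + 1 :=
        (div_lt_iff₀ hfactor).symm
    _ ↔ -4 * a * z ^ 2 / (z + r - a * r * (r - z)) - (1 - a * r) < b := by
        rw [sub_lt_iff_lt_add, add_sub_assoc', sub_add_eq_add_sub]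

end IsRabinovichEquilibrium_s13

theorem stability_case_ii_general {a b r x y z : ℝ}
    (h : IsRabinovichEquilibrium_s13 (-a * r) a b r x y z) (ha : a < 0) (hb : 0 < b) (hr : 0 < r)
    (hx : x ≠ 0) (hbcr : Rabinovich.bCr a r < b) (lam : ℂ)
    (hlam : lam ^ 3 + ((b - a * r + 1 : ℝ) : ℂ) * lam ^ 2 +
      (Rabinovich.charCoeff₂ a b r x y z : ℂ) * lam +
      (Rabinovich.charCoeff₃ a b r x y z : ℂ) = 0) : lam.re < 0 := by
  have hp₁ : 0 < b - a * r + 1 := by linarith [mul_neg_of_neg_of_pos ha hr]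
  have hp₃ : 0 < Rabinovich.charCoeff₃ a b r x y z := by
    rw [h.charCoeff₃_eq ha.ne hr.ne' hx]
    have := h.z_pos hb hr hx
    exact mul_pos hb (mul_pos (by linarith) (by positivity))
  exact re_neg_of_routhHurwitz_cubic hp₁ hp₃ ((h.charCoeff₃_lt_mul_iff ha hb hr hx).mpr hbcr) hlam

/-- Lemma on stability, case (ii): under condition (ii), every complex root
of the characteristic polynomial at S₊ has negative real part. -/
theorem stability_case_ii
    (a b r σ ξ x₁ y₁ z₁ : ℝ) (ha : a < 0) (hb : 0 < b) (hr : 1 < r) (hσ : σ = -a * r)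
    (hξ : ξ = (σ * b / (2 * a ^ 2)) *
      (a * (r - 2) - σ + Real.sqrt ((σ - a * r) ^ 2 + 4 * a * σ)))
    (hx₁ : x₁ = σ * b * Real.sqrt ξ / (σ * b + a * ξ))
    (hy₁ : y₁ = Real.sqrt ξ)
    (hz₁ : z₁ = σ * ξ / (σ * b + a * ξ))
    (har : a * r + 1 < 0)
    (hbcr : b > (4 * a * (r - 1) * (a * r + 1) * Real.sqrt (r * (r - 1)) + (a * r - 1) ^ 3) /
        ((a * r + 1) ^ 2 - 4 * a * r ^ 2)) :
    ∀ lam : ℂ,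
      lam ^ 3 + ((b - a * r + 1 : ℝ) : ℂ) * lam ^ 2 +
        ((x₁ ^ 2 + a * y₁ ^ 2 - a * z₁ ^ 2 - a * r * (b - r + 1) + b : ℝ) : ℂ) * lam +
        ((-a * (2 * x₁ * y₁ * z₁ + r * x₁ ^ 2 - y₁ ^ 2 + b * z₁ ^ 2 - b * r * (r - 1)) : ℝ) : ℂ)
        = 0 → lam.re < 0 := by
  have hσ_pos : 0 < -a * r := mul_pos (neg_pos.mpr ha) (one_pos.trans hr)
  subst hσ hξ hx₁ hy₁ hz₁
  exact stability_case_ii_general (Rabinovich.isRabinovichEquilibrium_xi hσ_pos ha.ne hb hr) ha hb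
    (one_pos.trans hr) (Rabinovich.xi_x_coord_pos hσ_pos ha.ne hb hr).ne' hbcr
end

section
/- Let a < 0, b > 0, r > 0, σ = −a·r, and let δ > 0 satisfy a + δ > 0. Set k = (σ + δ·r)/(a + δ) and V(x, y, z) = x² + δ·y² + (a + δ)·(z − k)². Then for every (x, y, z) ∈ ℝ³ the derivative of V along the generalized Lorenz vector field satisfies the identity ∇V(x, y, z) · f(x, y, z) = −2·σ·x² − 2·δ·y² − 2·(a + δ)·b·z² + 2·(σ + δ·r)·b·z, where f(x, y, z) = (−σ(x − y) − a·y·z, r·x − y − x·z, −b·z + x·y). -/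
/-!
For a Lyapunov function `x² + β y² + γ (z - k)²` with free weights `β`, `γ` and free centre `k`, the
only terms of its derivative along the field that mix variables are multiples of `x y z` and of
`x y`. The choice `γ = a + β` removes the former, and then `γ k = σ + β r` removes the latter.
-/

section GeneralizedLorenz

variable {𝕜 : Type*} [NontriviallyNormedField 𝕜]

/-- The vector field of the generalized Lorenz (Rabinovich) system, with `(x, y, z)` encoded as
`p = (p.1, p.2.1, p.2.2)`. -/
def generalizedLorenzField (a b r σ : 𝕜) (p : 𝕜 × 𝕜 × 𝕜) : 𝕜 × 𝕜 × 𝕜 :=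
  (-σ * (p.1 - p.2.1) - a * p.2.1 * p.2.2,
    r * p.1 - p.2.1 - p.1 * p.2.2,
    -b * p.2.2 + p.1 * p.2.1)

/-- The candidate Lyapunov function `x² + β y² + γ (z - k)²` of the generalized Lorenz system,
normalized so that `x²` has weight `1`. -/
def lorenzLyapunov (β γ k : 𝕜) (p : 𝕜 × 𝕜 × 𝕜) : 𝕜 :=
  p.1 ^ 2 + β * p.2.1 ^ 2 + γ * (p.2.2 - k) ^ 2

theorem hasFDerivAt_lorenzLyapunov (β γ k : 𝕜) (p : 𝕜 × 𝕜 × 𝕜) :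
    HasFDerivAt (lorenzLyapunov β γ k)
      ((2 * p.1) • ContinuousLinearMap.fst 𝕜 𝕜 (𝕜 × 𝕜) +
        (2 * β * p.2.1) •
          (ContinuousLinearMap.fst 𝕜 𝕜 𝕜).comp (ContinuousLinearMap.snd 𝕜 𝕜 (𝕜 × 𝕜)) +
        (2 * γ * (p.2.2 - k)) •
          (ContinuousLinearMap.snd 𝕜 𝕜 𝕜).comp (ContinuousLinearMap.snd 𝕜 𝕜 (𝕜 × 𝕜))) p := by
  have hx : HasFDerivAt (fun q : 𝕜 × 𝕜 × 𝕜 ↦ q.1) (.fst 𝕜 𝕜 (𝕜 × 𝕜)) p := hasFDerivAt_fst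
  have hyz : HasFDerivAt (fun q : 𝕜 × 𝕜 × 𝕜 ↦ q.2) (.snd 𝕜 𝕜 (𝕜 × 𝕜)) p := hasFDerivAt_snd
  have hV := ((hx.pow 2).add ((hyz.fst.pow 2).const_mul β)).add
    (((hyz.snd.sub_const k).pow 2).const_mul γ)
  refine hV.congr_fderiv (ContinuousLinearMap.ext fun v ↦ ?_)
  simp only [Nat.add_one_sub_one, pow_one, nsmul_eq_mul, Nat.cast_ofNat, add_apply, smul_apply,
    ContinuousLinearMap.coe_fst', smul_eq_mul, ContinuousLinearMap.comp_apply,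
    ContinuousLinearMap.coe_snd']
  ring

theorem fderiv_lorenzLyapunov_apply (β γ k : 𝕜) (p v : 𝕜 × 𝕜 × 𝕜) :
    fderiv 𝕜 (lorenzLyapunov β γ k) p v =
      2 * p.1 * v.1 + 2 * β * p.2.1 * v.2.1 + 2 * γ * (p.2.2 - k) * v.2.2 := by
  simp [(hasFDerivAt_lorenzLyapunov β γ k p).fderiv]

theorem fderiv_lorenzLyapunov_generalizedLorenzField (a b r σ β γ k : 𝕜) (p : 𝕜 × 𝕜 × 𝕜) :
    fderiv 𝕜 (lorenzLyapunov β γ k) p (generalizedLorenzField a b r σ p) =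
      -2 * σ * p.1 ^ 2 - 2 * β * p.2.1 ^ 2 - 2 * γ * b * p.2.2 ^ 2 + 2 * (γ * k) * b * p.2.2 +
        2 * (σ + β * r - γ * k) * (p.1 * p.2.1) +
        2 * (γ - (a + β)) * (p.1 * p.2.1 * p.2.2) := by
  rw [fderiv_lorenzLyapunov_apply, generalizedLorenzField]
  ring

theorem lyapunov_derivative_along_field_general (a b r σ δ k : 𝕜)
    (hk : (a + δ) * k = σ + δ * r) (p : 𝕜 × 𝕜 × 𝕜) :
    fderiv 𝕜 (lorenzLyapunov δ (a + δ) k) p (generalizedLorenzField a b r σ p) =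
      -2 * σ * p.1 ^ 2 - 2 * δ * p.2.1 ^ 2 - 2 * (a + δ) * b * p.2.2 ^ 2 +
        2 * (σ + δ * r) * b * p.2.2 := by
  rw [fderiv_lorenzLyapunov_generalizedLorenzField, hk]
  ring

end GeneralizedLorenz

/-- the derivative of the Lyapunov function V along the generalized
Lorenz vector field. -/
theorem lyapunov_derivative_along_field
    (a b r σ δ : ℝ) (ha : a < 0) (hb : 0 < b) (hr : 0 < r) (hσ : σ = -a * r)
    (hδ : 0 < δ) (haδ : 0 < a + δ)
    (k : ℝ) (hk : k = (σ + δ * r) / (a + δ))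
    (V : ℝ × ℝ × ℝ → ℝ)
    (hV : V = fun p => p.1 ^ 2 + δ * p.2.1 ^ 2 + (a + δ) * (p.2.2 - k) ^ 2)
    (f : ℝ × ℝ × ℝ → ℝ × ℝ × ℝ)
    (hf : f = fun p => (-σ * (p.1 - p.2.1) - a * p.2.1 * p.2.2,
                        r * p.1 - p.2.1 - p.1 * p.2.2,
                        -b * p.2.2 + p.1 * p.2.1)) :
    ∀ p : ℝ × ℝ × ℝ,
      fderiv ℝ V p (f p) =
        -2 * σ * p.1 ^ 2 - 2 * δ * p.2.1 ^ 2 - 2 * (a + δ) * b * p.2.2 ^ 2 +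
          2 * (σ + δ * r) * b * p.2.2 := by
  subst hV hf
  exact lyapunov_derivative_along_field_general a b r σ δ k (by rw [hk, mul_div_cancel₀ _ haδ.ne'])
end
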